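/- arXiv:1006.4167 — 3 statements merged into one kernel-verified Lean document; each statement's English description precedes it below -/
import Mathlib

section
/- Let H₁, H₂, H₃ be complex Hilbert spaces and let T₁ : H₁ → H₂ and T₂ : H₂ → H₃ be densely defined, closed linear operators with range(T₁) ⊆ ker(T₂). Suppose range(T₁) and range(T₂) are closed and L := ker(T₁*) ∩ ker(T₂) is finite-dimensional. Then L ⊆ dom(T₁*) ∩ ker(T₂), ker(T₂) ∩ L^⊥ = P_{L^⊥}(range(T₁)) (where P_{L^⊥} is the orthogonal projection of H₂ onto L^⊥), and the range of the restriction of T₂ to dom(T₂) ∩ L^⊥ is closed in H₃. -/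
open scoped LinearPMap InnerProductSpace

/-- Suppose `range T₁` and `range T₂` are closed and
`L := ker T₁* ∩ ker T₂` is finite-dimensional. Then `L ⊆ dom T₁* ∩ ker T₂`,
`ker T₂ ∩ Lᗮ = P_{Lᗮ}(range T₁)`, and the range of the restriction of `T₂` to
`dom T₂ ∩ Lᗮ` is closed in `H₃`. -/
theorem kernel_conditions_of_closed_ranges
    {H₁ H₂ H₃ : Type*}
    [NormedAddCommGroup H₁] [InnerProductSpace ℂ H₁] [CompleteSpace H₁]
    [NormedAddCommGroup H₂] [InnerProductSpace ℂ H₂] [CompleteSpace H₂]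
    [NormedAddCommGroup H₃] [InnerProductSpace ℂ H₃] [CompleteSpace H₃]
    (T₁ : H₁ →ₗ.[ℂ] H₂) (T₂ : H₂ →ₗ.[ℂ] H₃)
    (hd₁ : Dense (T₁.domain : Set H₁)) (hd₂ : Dense (T₂.domain : Set H₂))
    (hc₁ : T₁.IsClosed) (hc₂ : T₂.IsClosed)
    (hrange : LinearMap.range T₁.toFun ≤
      (LinearMap.ker T₂.toFun).map T₂.domain.subtype)
    (hclosed₁ : IsClosed (LinearMap.range T₁.toFun : Set H₂))
    (hclosed₂ : IsClosed (LinearMap.range T₂.toFun : Set H₃))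
    (L : Submodule ℂ H₂)
    (hLdef : L = (LinearMap.ker T₁.adjoint.toFun).map T₁.adjoint.domain.subtype ⊓
      (LinearMap.ker T₂.toFun).map T₂.domain.subtype)
    [FiniteDimensional ℂ L] :
    L ≤ T₁.adjoint.domain ⊓ (LinearMap.ker T₂.toFun).map T₂.domain.subtype ∧
    (((LinearMap.ker T₂.toFun).map T₂.domain.subtype ⊓ Lᗮ : Submodule ℂ H₂) : Set H₂) =
      (fun w => (Submodule.orthogonalProjectionOnto Lᗮ w : H₂)) '' (LinearMap.range T₁.toFun) ∧
    IsClosed ((fun x : T₂.domain => T₂ x) '' {x : T₂.domain | (x : H₂) ∈ Lᗮ} : Set H₃) := by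
  have key : ∀ y : H₂, y ∈ (LinearMap.ker T₁.adjoint.toFun).map T₁.adjoint.domain.subtype ↔
      y ∈ (LinearMap.range T₁.toFun)ᗮ := by
    intro y
    constructor
    · rintro ⟨z, hz, rfl⟩
      rw [Submodule.mem_orthogonal']
      rintro _ ⟨x, rfl⟩
      have h := LinearPMap.adjoint_isFormalAdjoint hd₁ z x
      have hz' : T₁.adjoint z = 0 := hz
      rw [hz', inner_zero_left] at h
      exact h.symm
    · intro hy
      rw [Submodule.mem_orthogonal'] at hy
      have h0 : ∀ x : T₁.domain, inner ℂ (0 : H₁) (x : H₁) = inner ℂ y (T₁ x) := by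
        intro x
        rw [inner_zero_left]
        exact (hy _ ⟨x, rfl⟩).symm
      have hmem := LinearPMap.mem_adjoint_domain_of_exists (T := T₁) y ⟨0, h0⟩
      exact ⟨⟨y, hmem⟩, LinearPMap.adjoint_apply_eq hd₁ ⟨y, hmem⟩ h0, rfl⟩
  have hL : ∀ y : H₂, y ∈ L ↔ y ∈ (LinearMap.range T₁.toFun)ᗮ ∧
      y ∈ (LinearMap.ker T₂.toFun).map T₂.domain.subtype := by
    intro y
    rw [hLdef, Submodule.mem_inf, key]
  have hRL : LinearMap.range T₁.toFun ≤ Lᗮ := by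
    intro r hr
    rw [Submodule.mem_orthogonal']
    intro y hy
    exact ((hL y).1 hy).1 r hr
  refine ⟨?_, ?_, ?_⟩
  · intro y hy
    refine ⟨?_, ((hL y).1 hy).2⟩
    obtain ⟨z, -, rfl⟩ := (key y).2 ((hL y).1 hy).1
    exact z.2
  · ext x
    constructor
    · rintro ⟨hxK, hxL⟩
      have : CompleteSpace (LinearMap.range T₁.toFun) := hclosed₁.completeSpace_coe
      obtain ⟨r, hr, s, hs, rfl⟩ :=
        (LinearMap.range T₁.toFun).exists_add_mem_mem_orthogonal x
      have hsK : s ∈ (LinearMap.ker T₂.toFun).map T₂.domain.subtype := by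
        have := Submodule.sub_mem _ hxK (hrange hr)
        rwa [add_sub_cancel_left] at this
      have hsL : s ∈ Lᗮ := by
        have := Submodule.sub_mem _ hxL (hRL hr)
        rwa [add_sub_cancel_left] at this
      have hs0 : s = 0 := inner_self_eq_zero.1 (hsL s ((hL s).2 ⟨hs, hsK⟩))
      refine ⟨r, hr, ?_⟩
      simp only [hs0, add_zero]
      exact Submodule.starProjection_eq_self_iff.2 (hRL hr)
    · rintro ⟨r, hr, rfl⟩
      have h : ((Submodule.orthogonalProjectionOnto Lᗮ r : Lᗮ) : H₂) = r :=
        Submodule.starProjection_eq_self_iff.2 (hRL hr)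
      simp only [h]
      exact ⟨hrange hr, hRL hr⟩
  · convert hclosed₂ using 1
    ext z
    constructor
    · rintro ⟨x, -, rfl⟩
      exact ⟨x, rfl⟩
    · rintro ⟨x, rfl⟩
      obtain ⟨l, hl, m, hm, hx⟩ := L.exists_add_mem_mem_orthogonal (x : H₂)
      obtain ⟨k, hk, rfl⟩ := ((hL l).1 hl).2
      refine ⟨x - k, ?_, ?_⟩
      · have : ((x - k : T₂.domain) : H₂) = m := by
          rw [Submodule.coe_sub, hx]
          simp
        simpa only [Set.mem_setOf_eq, this] using hm
      · have hk' : T₂.toFun k = 0 := hk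
        change T₂.toFun (x - k) = T₂.toFun x
        rw [map_sub, hk', sub_zero]
end

section
/- Let H₁, H₂, H₃ be complex Hilbert spaces and let T₁ : H₁ → H₂ and T₂ : H₂ → H₃ be densely defined, closed linear operators with range(T₁) ⊆ ker(T₂). Suppose there exists a finite-dimensional subspace L ⊆ dom(T₁*) ∩ ker(T₂) such that ker(T₂) ∩ L^⊥ = P_{L^⊥}(range(T₁)) (where P_{L^⊥} is the orthogonal projection of H₂ onto L^⊥) and the range of the restriction of T₂ to dom(T₂) ∩ L^⊥ is closed in H₃. Then there exists a constant c > 0 such that ‖T₁*u‖² + ‖T₂u‖² ≥ c‖u‖² for all u ∈ dom(T₁*) ∩ dom(T₂) with u ⊥ L. -/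
open scoped LinearPMap InnerProductSpace

theorem exists_preimage_bound_of_closed_range {E F : Type*}
    [NormedAddCommGroup E] [NormedSpace ℂ E] [CompleteSpace E]
    [NormedAddCommGroup F] [NormedSpace ℂ F] [CompleteSpace F]
    (f : E →L[ℂ] F) (S : Set F) (hS : S = Set.range f) (hf : IsClosed S) :
    ∃ C : ℝ, 0 < C ∧ ∀ y ∈ S, ∃ x, f x = y ∧ ‖x‖ ≤ C * ‖y‖ := by
  subst hS
  have hc : IsClosed ((LinearMap.range f.toLinearMap : Submodule ℂ F) : Set F) := by
    rw [LinearMap.coe_range]; exact hf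
  haveI : CompleteSpace (LinearMap.range f.toLinearMap) := hc.completeSpace_coe
  let g : E →L[ℂ] LinearMap.range f.toLinearMap :=
    f.codRestrict _ (fun x => LinearMap.mem_range_self f.toLinearMap x)
  have hg : Function.Surjective g := by
    rintro ⟨y, x, rfl⟩
    exact ⟨x, rfl⟩
  obtain ⟨C, hC, h⟩ := g.exists_preimage_norm_le hg
  refine ⟨C, hC, ?_⟩
  rintro y ⟨x, rfl⟩
  obtain ⟨z, hz, hzn⟩ := h (g x)
  exact ⟨z, congrArg Subtype.val hz, hzn⟩

/-- Suppose there is a finite-dimensional subspace `L ⊆ dom T₁* ∩ ker T₂`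
with `ker T₂ ∩ Lᗮ = P_{Lᗮ}(range T₁)` and such that the range of the restriction of `T₂` to
`dom T₂ ∩ Lᗮ` is closed in `H₃`. Then there is `c > 0` with `‖T₁*u‖² + ‖T₂u‖² ≥ c‖u‖²`
for all `u ∈ dom T₁* ∩ dom T₂` with `u ⊥ L`. -/
theorem coercive_off_L_of_kernel_conditions
    {H₁ H₂ H₃ : Type*}
    [NormedAddCommGroup H₁] [InnerProductSpace ℂ H₁] [CompleteSpace H₁]
    [NormedAddCommGroup H₂] [InnerProductSpace ℂ H₂] [CompleteSpace H₂]
    [NormedAddCommGroup H₃] [InnerProductSpace ℂ H₃] [CompleteSpace H₃]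
    (T₁ : H₁ →ₗ.[ℂ] H₂) (T₂ : H₂ →ₗ.[ℂ] H₃)
    (hd₁ : Dense (T₁.domain : Set H₁)) (hd₂ : Dense (T₂.domain : Set H₂))
    (hc₁ : T₁.IsClosed) (hc₂ : T₂.IsClosed)
    (hrange : LinearMap.range T₁.toFun ≤
      (LinearMap.ker T₂.toFun).map T₂.domain.subtype)
    (L : Submodule ℂ H₂) [FiniteDimensional ℂ L]
    (hL : L ≤ T₁.adjoint.domain ⊓ (LinearMap.ker T₂.toFun).map T₂.domain.subtype)
    (hproj : (((LinearMap.ker T₂.toFun).map T₂.domain.subtype ⊓ Lᗮ : Submodule ℂ H₂) : Set H₂) =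
      (fun w => (Submodule.orthogonalProjectionOnto Lᗮ w : H₂)) '' (LinearMap.range T₁.toFun))
    (hclosed : IsClosed
      ((fun x : T₂.domain => T₂ x) '' {x : T₂.domain | (x : H₂) ∈ Lᗮ} : Set H₃)) :
    ∃ c : ℝ, 0 < c ∧ ∀ (u : H₂) (hu₁ : u ∈ T₁.adjoint.domain) (hu₂ : u ∈ T₂.domain),
      u ∈ Lᗮ → c * ‖u‖ ^ 2 ≤ ‖T₁.adjoint ⟨u, hu₁⟩‖ ^ 2 + ‖T₂ ⟨u, hu₂⟩‖ ^ 2 := by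
  have hkc : IsClosed (((LinearMap.ker T₂.toFun).map T₂.domain.subtype ⊓ Lᗮ : Submodule ℂ H₂)
      : Set H₂) := by
    have h1 : IsClosed {x : H₂ | (x, (0 : H₃)) ∈ (T₂.graph : Set (H₂ × H₃))} :=
      IsClosed.preimage (by fun_prop) hc₂
    convert h1.inter L.isClosed_orthogonal using 1
    ext x
    simp only [Submodule.coe_inf, Set.mem_inter_iff, SetLike.mem_coe, Submodule.mem_map,
      LinearMap.mem_ker, Set.mem_ofPred_eq, LinearPMap.mem_graph_iff]
    refine and_congr_left fun _ => ?_
    constructor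
    · rintro ⟨y, hy, rfl⟩
      exact ⟨y, rfl, hy⟩
    · rintro ⟨y, hy, hy'⟩
      exact ⟨y, hy', hy⟩
  haveI : CompleteSpace T₁.graph := by
    have h : IsClosed (T₁.graph : Set (H₁ × H₂)) := hc₁
    exact h.completeSpace_coe
  obtain ⟨C, hC, hA⟩ := exists_preimage_bound_of_closed_range
    (Lᗮ.subtypeL ∘L (Submodule.orthogonalProjectionOnto Lᗮ) ∘L (ContinuousLinearMap.snd ℂ H₁ H₂) ∘L
      T₁.graph.subtypeL) _ (by
      rw [hproj]
      ext y
      constructor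
      · rintro ⟨_, ⟨x, rfl⟩, rfl⟩
        exact ⟨⟨_, T₁.mem_graph x⟩, rfl⟩
      · rintro ⟨⟨⟨a, b⟩, hab⟩, rfl⟩
        obtain ⟨x, hx, hx'⟩ := (LinearPMap.mem_graph_iff _).1 hab
        exact ⟨b, ⟨x, hx'⟩, rfl⟩) hkc
  let G : Submodule ℂ (H₂ × H₃) := T₂.graph ⊓ Lᗮ.comap (LinearMap.fst ℂ H₂ H₃)
  have hG : IsClosed (G : Set (H₂ × H₃)) :=
    IsClosed.inter hc₂ (L.isClosed_orthogonal.preimage continuous_fst)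
  haveI : CompleteSpace G := hG.completeSpace_coe
  obtain ⟨D, hD, hB⟩ := exists_preimage_bound_of_closed_range
    ((ContinuousLinearMap.snd ℂ H₂ H₃) ∘L G.subtypeL) _ (by
      ext y
      constructor
      · rintro ⟨x, hx, rfl⟩
        exact ⟨⟨_, T₂.mem_graph x, hx⟩, rfl⟩
      · rintro ⟨⟨⟨a, b⟩, hab, ha⟩, rfl⟩
        obtain ⟨x, hx, hx'⟩ := (LinearPMap.mem_graph_iff _).1 hab
        simp only at hx hx'
        subst hx
        exact ⟨x, ha, hx'⟩) hclosed
  have key : ∀ (u : H₂) (hu₁ : u ∈ T₁.adjoint.domain) (hu₂ : u ∈ T₂.domain),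
      u ∈ Lᗮ → ‖u‖ ≤ C * ‖T₁.adjoint ⟨u, hu₁⟩‖ + 2 * D * ‖T₂ ⟨u, hu₂⟩‖ := by
    intro u hu₁ hu₂ huL
    obtain ⟨⟨⟨v, b⟩, hvb, hvL⟩, hb, hvn⟩ := hB (T₂ ⟨u, hu₂⟩) ⟨⟨u, hu₂⟩, huL, rfl⟩
    obtain ⟨v', rfl, hv'⟩ := (LinearPMap.mem_graph_iff _).1 hvb
    change b = _ at hb
    change T₂ v' = b at hv'
    have hv : ‖(v' : H₂)‖ ≤ D * ‖T₂ ⟨u, hu₂⟩‖ := (norm_fst_le ((v' : H₂), b)).trans hvn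
    have hwK : u - v' ∈ (((LinearMap.ker T₂.toFun).map T₂.domain.subtype ⊓ Lᗮ : Submodule ℂ H₂)
      : Set H₂) := by
      refine ⟨⟨⟨u, hu₂⟩ - v', ?_, rfl⟩, Lᗮ.sub_mem huL hvL⟩
      change T₂.toFun _ = 0
      rw [map_sub]
      change T₂ _ - T₂ _ = 0
      rw [hv', hb, sub_self]
    obtain ⟨⟨⟨a, y⟩, hay⟩, hy, hxn⟩ := hA _ hwK
    obtain ⟨x, rfl, hx⟩ := (LinearPMap.mem_graph_iff _).1 hay
    change T₁ x = y at hx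
    change ((Submodule.orthogonalProjectionOnto Lᗮ y : Lᗮ) : H₂) = _ at hy
    have hxn' : ‖(x : H₁)‖ ≤ C * ‖u - v'‖ := (norm_fst_le ((x : H₁), y)).trans hxn
    have hin : inner ℂ u (u - v') = inner ℂ (T₁.adjoint ⟨u, hu₁⟩) (x : H₁) := by
      rw [LinearPMap.adjoint_isFormalAdjoint hd₁ ⟨u, hu₁⟩ x, hx, ← hy]
      exact Submodule.inner_orthogonalProjectionOnto_eq_of_mem_left (K := Lᗮ) ⟨u, huL⟩ y
    have h1 : ‖inner ℂ u (u - v')‖ ≤ ‖T₁.adjoint ⟨u, hu₁⟩‖ * (C * ‖u - v'‖) := by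
      rw [hin]
      exact (norm_inner_le_norm _ _).trans (by gcongr)
    have h2 : ‖inner ℂ (v' : H₂) (u - v')‖ ≤ (D * ‖T₂ ⟨u, hu₂⟩‖) * ‖u - v'‖ :=
      (norm_inner_le_norm _ _).trans (by gcongr)
    have h3 : ‖u - v'‖ * ‖u - v'‖ ≤
        (C * ‖T₁.adjoint ⟨u, hu₁⟩‖ + D * ‖T₂ ⟨u, hu₂⟩‖) * ‖u - v'‖ := by
      have e : ‖u - v'‖ * ‖u - v'‖ = ‖inner ℂ (u - v') (u - v')‖ := by
        rw [inner_self_eq_norm_sq_to_K]; simp [sq]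
      rw [e, inner_sub_left]
      refine (norm_sub_le _ _).trans ?_
      linarith
    have h4 : ‖u - v'‖ ≤ C * ‖T₁.adjoint ⟨u, hu₁⟩‖ + D * ‖T₂ ⟨u, hu₂⟩‖ := by
      rcases (norm_nonneg (u - v')).eq_or_lt with h | h
      · rw [← h]; positivity
      · exact le_of_mul_le_mul_right h3 h
    have h5 : ‖u‖ ≤ ‖u - v'‖ + ‖(v' : H₂)‖ := by
      simpa using norm_add_le (u - v') (v' : H₂)
    linarith
  refine ⟨1 / (C ^ 2 + (2 * D) ^ 2), by positivity, fun u hu₁ hu₂ huL => ?_⟩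
  have hk := key u hu₁ hu₂ huL
  generalize ‖T₁.adjoint ⟨u, hu₁⟩‖ = a at hk ⊢
  generalize ‖T₂ ⟨u, hu₂⟩‖ = b at hk ⊢
  have hsq : ‖u‖ ^ 2 ≤ (C * a + 2 * D * b) ^ 2 := by gcongr
  rw [one_div, inv_mul_le_iff₀ (by positivity)]
  nlinarith [sq_nonneg (C * b - 2 * D * a)]
end

section
/- Let H₁ and H₂ be complex Hilbert spaces, let T : H₁ → H₂ be a densely defined, closed linear operator with adjoint T* : H₂ → H₁, and let L be a finite-dimensional subspace of H₂ with L ⊆ dom(T*). Regard the closed subspace L^⊥ as a Hilbert space, and define S : L^⊥ → H₁ as the restriction of T* to dom(S) = dom(T*) ∩ L^⊥. Then S is densely defined and closed, and its adjoint S* : H₁ → L^⊥ satisfies dom(S*) = dom(T) and S*f = P_{L^⊥}(Tf) for all f ∈ dom(T), where P_{L^⊥} is the orthogonal projection of H₂ onto L^⊥. -/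
open scoped LinearPMap InnerProductSpace

/-- The restriction `S` of the adjoint `T* : H₂ →ₗ. H₁` to `dom T* ∩ Lᗮ`, regarded as a
(partially defined) operator from the Hilbert space `Lᗮ` to `H₁`. -/
noncomputable def adjointRestrict
    {H₁ H₂ : Type*}
    [NormedAddCommGroup H₁] [InnerProductSpace ℂ H₁] [CompleteSpace H₁]
    [NormedAddCommGroup H₂] [InnerProductSpace ℂ H₂] [CompleteSpace H₂]
    (T : H₁ →ₗ.[ℂ] H₂) (L : Submodule ℂ H₂) : ↥Lᗮ →ₗ.[ℂ] H₁ where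
  domain := T.adjoint.domain.comap Lᗮ.subtype
  toFun := T.adjoint.toFun.comp (Lᗮ.subtype.restrict fun _ hx => hx)

/-- A closed operator contains every pair annihilated by the graph of its adjoint. -/
theorem mem_graph_of_biadjoint
    {H₁ H₂ : Type*}
    [NormedAddCommGroup H₁] [InnerProductSpace ℂ H₁] [CompleteSpace H₁]
    [NormedAddCommGroup H₂] [InnerProductSpace ℂ H₂] [CompleteSpace H₂]
    (T : H₁ →ₗ.[ℂ] H₂) (hd : Dense (T.domain : Set H₁)) (hc : T.IsClosed)
    (x : H₁) (y : H₂)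
    (h : ∀ a : T.adjoint.domain, inner ℂ (T.adjoint a) x = inner ℂ (a : H₂) y) :
    (x, y) ∈ T.graph := by
  let G : Submodule ℂ (WithLp 2 (H₁ × H₂)) :=
    T.graph.comap (WithLp.linearEquiv 2 ℂ (H₁ × H₂)).toLinearMap
  have hG : IsClosed (G : Set (WithLp 2 (H₁ × H₂))) :=
    IsClosed.preimage (WithLp.prod_continuous_ofLp 2 H₁ H₂) hc
  have hGG : Gᗮᗮ = G := by
    rw [Submodule.orthogonal_orthogonal_eq_closure, hG.submodule_topologicalClosure_eq]
  have key : WithLp.toLp 2 (x, y) ∈ G := by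
    rw [← hGG, Submodule.mem_orthogonal]
    intro w hw
    rw [Submodule.mem_orthogonal'] at hw
    have hv : ∀ v : T.domain, inner ℂ (-w.fst) (v : H₁) = inner ℂ w.snd (T v) := by
      intro v
      have := hw (WithLp.toLp 2 ((v : H₁), T v)) (T.mem_graph v)
      rw [WithLp.prod_inner_apply] at this
      rw [inner_neg_left]
      exact neg_eq_of_add_eq_zero_right this
    have hm : w.snd ∈ T.adjoint.domain :=
      LinearPMap.mem_adjoint_domain_of_exists _ ⟨-w.fst, hv⟩
    have he : T.adjoint ⟨w.snd, hm⟩ = -w.fst := LinearPMap.adjoint_apply_eq hd _ hv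
    have := h ⟨w.snd, hm⟩
    rw [he, inner_neg_left] at this
    rw [WithLp.prod_inner_apply]
    change inner ℂ w.fst x + inner ℂ w.snd y = 0
    rw [← this]; simp
  exact key

theorem dense_of_inner_zero {H : Type*}
    [NormedAddCommGroup H] [InnerProductSpace ℂ H] [CompleteSpace H]
    (K : Submodule ℂ H) (h : ∀ y, (∀ a ∈ K, inner ℂ a y = 0) → y = 0) :
    Dense (K : Set H) := by
  rw [Submodule.dense_iff_topologicalClosure_eq_top,
    Submodule.topologicalClosure_eq_top_iff, Submodule.eq_bot_iff]
  intro y hy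
  exact h y fun a ha => (Submodule.mem_orthogonal _ _).1 hy a ha

theorem adjoint_domain_dense
    {H₁ H₂ : Type*}
    [NormedAddCommGroup H₁] [InnerProductSpace ℂ H₁] [CompleteSpace H₁]
    [NormedAddCommGroup H₂] [InnerProductSpace ℂ H₂] [CompleteSpace H₂]
    (T : H₁ →ₗ.[ℂ] H₂) (hd : Dense (T.domain : Set H₁)) (hc : T.IsClosed) :
    Dense (T.adjoint.domain : Set H₂) := by
  refine dense_of_inner_zero _ fun y hy => ?_
  have := mem_graph_of_biadjoint T hd hc 0 y fun a => by
    rw [inner_zero_right, hy a a.2]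
  exact T.graph_fst_eq_zero_snd this rfl

/-- Let `T : H₁ → H₂` be densely defined and closed, and let `L` be a
finite-dimensional subspace of `H₂` with `L ⊆ dom T*`. Let `S : Lᗮ → H₁` be the restriction
of `T*` with `dom S = dom T* ∩ Lᗮ`.  Then `S` is densely defined and closed, and its adjoint
`S* : H₁ → Lᗮ` satisfies `dom S* = dom T` and `S* f = P_{Lᗮ}(T f)` for all `f ∈ dom T`. -/
theorem adjointRestrict_adjoint
    {H₁ H₂ : Type*}
    [NormedAddCommGroup H₁] [InnerProductSpace ℂ H₁] [CompleteSpace H₁]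
    [NormedAddCommGroup H₂] [InnerProductSpace ℂ H₂] [CompleteSpace H₂]
    (T : H₁ →ₗ.[ℂ] H₂) (hd : Dense (T.domain : Set H₁)) (hc : T.IsClosed)
    (L : Submodule ℂ H₂) [FiniteDimensional ℂ L] (hL : L ≤ T.adjoint.domain) :
    Dense (((adjointRestrict T L).domain : Submodule ℂ ↥Lᗮ) : Set ↥Lᗮ) ∧
    (adjointRestrict T L).IsClosed ∧
    (adjointRestrict T L).adjoint.domain = T.domain ∧
    ∀ (f : H₁) (hf : f ∈ T.domain) (hf' : f ∈ (adjointRestrict T L).adjoint.domain),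
      (adjointRestrict T L).adjoint ⟨f, hf'⟩ = Submodule.orthogonalProjectionOnto Lᗮ (T ⟨f, hf⟩) := by
  have hSapp : ∀ (x : (adjointRestrict T L).domain),
      adjointRestrict T L x = T.adjoint ⟨((x : ↥Lᗮ) : H₂), x.2⟩ := fun x => rfl
  have hproj : ∀ a : H₂, a - (L.orthogonalProjectionOnto a : H₂) ∈ Lᗮ := fun a =>
    Submodule.sub_starProjection_mem_orthogonal a
  have hdom : ∀ a ∈ T.adjoint.domain,
      a - (L.orthogonalProjectionOnto a : H₂) ∈ T.adjoint.domain := fun a ha =>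
    T.adjoint.domain.sub_mem ha (hL (L.orthogonalProjectionOnto a).2)
  have hperp : ∀ (a : H₂) (u : ↥Lᗮ),
      inner ℂ (a - (L.orthogonalProjectionOnto a : H₂)) (u : H₂) = inner ℂ a (u : H₂) := by
    intro a u
    rw [inner_sub_left, (Submodule.mem_orthogonal _ _).1 u.2 _ (L.orthogonalProjectionOnto a).2,
      sub_zero]
  have hTd := adjoint_domain_dense T hd hc
  have hSd : Dense (((adjointRestrict T L).domain : Submodule ℂ ↥Lᗮ) : Set ↥Lᗮ) := by
    refine dense_of_inner_zero _ fun u hu => ?_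
    apply Subtype.ext
    refine hTd.eq_zero_of_inner_right ℂ fun a ha => ?_
    rw [← hperp]
    exact hu ⟨_, hproj a⟩ (hdom a ha)
  have hin : ∀ (f : H₁) (hf : f ∈ T.domain) (x : (adjointRestrict T L).domain),
      inner ℂ (Submodule.orthogonalProjectionOnto Lᗮ (T ⟨f, hf⟩)) (x : ↥Lᗮ)
        = inner ℂ f (adjointRestrict T L x) := by
    intro f hf x
    rw [hSapp, Submodule.inner_orthogonalProjectionOnto_eq_of_mem_right]
    exact (LinearPMap.adjoint_isFormalAdjoint hd).symm ⟨f, hf⟩ ⟨((x : ↥Lᗮ) : H₂), x.2⟩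
  refine ⟨hSd, ?_, le_antisymm ?_ ?_, ?_⟩
  · have hcl : T.adjoint.IsClosed := LinearPMap.adjoint_isClosed hd
    have : ((adjointRestrict T L).graph : Set (↥Lᗮ × H₁)) =
        (fun p : ↥Lᗮ × H₁ => ((p.1 : H₂), p.2)) ⁻¹' (T.adjoint.graph : Set (H₂ × H₁)) := by
      ext ⟨u, z⟩
      simp only [SetLike.mem_coe, Set.mem_preimage, LinearPMap.mem_graph_iff]
      constructor
      · rintro ⟨x, rfl, rfl⟩
        exact ⟨⟨((x : ↥Lᗮ) : H₂), x.2⟩, rfl, rfl⟩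
      · rintro ⟨⟨a, ha⟩, h1, h2⟩
        dsimp only at h1 h2
        subst h1
        exact ⟨⟨u, ha⟩, rfl, h2⟩
    change IsClosed ((adjointRestrict T L).graph : Set (↥Lᗮ × H₁))
    rw [this]
    exact IsClosed.preimage (by fun_prop) hcl
  · intro f hf
    let B : L →L[ℂ] H₁ :=
      LinearMap.toContinuousLinearMap (T.adjoint.toFun.comp (Submodule.inclusion hL))
    let g : ↥Lᗮ := (adjointRestrict T L).adjoint ⟨f, hf⟩
    have hg := mem_graph_of_biadjoint T hd hc f
      ((g : H₂) + (ContinuousLinearMap.adjoint B f : L)) (by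
        rintro ⟨a, ha⟩
        have e1 : T.adjoint ⟨a, ha⟩ =
            adjointRestrict T L ⟨⟨_, hproj a⟩, hdom a ha⟩ + B (L.orthogonalProjectionOnto a) := by
          rw [hSapp]
          change _ = _ + T.adjoint ⟨(L.orthogonalProjectionOnto a : H₂), _⟩
          rw [← LinearPMap.map_add]
          congr 1
          apply Subtype.ext
          simp
        have e2 := (LinearPMap.adjoint_isFormalAdjoint hSd).symm
          ⟨⟨_, hproj a⟩, hdom a ha⟩ ⟨f, hf⟩
        rw [e1, inner_add_left, e2, inner_add_right, ← ContinuousLinearMap.adjoint_inner_right,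
          Submodule.inner_orthogonalProjectionOnto_eq_of_mem_right]
        congr 1
        exact hperp a g)
    exact LinearPMap.mem_domain_of_mem_graph hg
  · intro f hf
    exact LinearPMap.mem_adjoint_domain_of_exists _ ⟨_, hin f hf⟩
  · intro f hf hf'
    exact LinearPMap.adjoint_apply_eq hSd _ (hin f hf)
end
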